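/- Let 2 ≤ d1 < d2 and let C be a positive semidefinite matrix on ℂ^{d1}⊗ℂ^{d2} with 4 ≤ rank(C) ≤ d2. Then there exists a unitary U on ℂ^{d1}⊗ℂ^{d2} such that for every diagonal matrix D on ℂ^{d1}⊗ℂ^{d2} whose diagonal entries are a permutation of the eigenvalues of C (with multiplicity), the vector λ(tr_1[UCU*]) ⊕ λ(tr_2[UCU*]) is NOT majorized by λ(tr_1[D]) ⊕ λ(tr_2[D]). -/

import Mathlib

/-!
Arrange the eigenvalues of `C` on a grid whose support lies in the hook formed by row `i` and
column `s`, with the largest at the corner `(i, s)` and the next two at `(i, t)` and `(j, s)`. Then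
rotate in the plane of a fourth occupied cell `a` of the hook and the empty cell `(j, t)`, so that a
small weight `ε` moves from `a` to `(j, t)`. As these two cells share neither row nor column, the
partial traces stay diagonal, and their eigenvalues are the marginals of the new grid.

By inclusion–exclusion, the marginals over a set `A` of rows and a set `B` of columns add up to the
total plus the sum over `A × B` minus the sum over `Aᶜ × Bᶜ`. If a diagonal `D` is supported in a
hook, then `A × B` with `#A + #B = 4` meets this hook in at most three cells, so the four largest
marginals of `D` sum to at most the total plus the three largest eigenvalues; the rotated grid
exceeds this by `ε`. If the support of `D` is in no hook, then every choice of a row and a column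
misses a nonzero eigenvalue, and the rotated grid wins on the two largest marginals because it loses
only `ε` there.
-/

open Matrix Finset Kronecker
open scoped ComplexOrder

/-- The first partial trace of a matrix on `ℂ^{d1} ⊗ ℂ^{d2}` (index pairs `(i,s)` ordered
lexicographically): `(tr_1 C)_{s,t} = ∑_i C_{(i,s),(i,t)}`. -/
noncomputable def ptrace1 {d1 d2 : ℕ} (C : Matrix (Fin d1 × Fin d2) (Fin d1 × Fin d2) ℂ) :
    Matrix (Fin d2) (Fin d2) ℂ :=
  Matrix.of fun s t => ∑ i : Fin d1, C (i, s) (i, t)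

/-- The second partial trace: `(tr_2 C)_{i,j} = ∑_s C_{(i,s),(j,s)}`. -/
noncomputable def ptrace2 {d1 d2 : ℕ} (C : Matrix (Fin d1 × Fin d2) (Fin d1 × Fin d2) ℂ) :
    Matrix (Fin d1) (Fin d1) ℂ :=
  Matrix.of fun i j => ∑ s : Fin d2, C (i, s) (j, s)

/-- The sum of the `k` largest entries of the vector `x` (the largest value of a sum of `k`
entries of `x`), i.e. `∑_{i=1}^k x_i^↓`. -/
noncomputable def maxSum {ι : Type*} [Fintype ι] (x : ι → ℝ) (k : ℕ) : ℝ :=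
  sSup {s : ℝ | ∃ A : Finset ι, A.card = k ∧ s = ∑ i ∈ A, x i}

/-- `x ≺ y` (majorization): for every `k`, the sum of the `k` largest entries of `x` is at
most the sum of the `k` largest entries of `y`, and the total sums are equal. -/
def Majorizes {ι κ : Type*} [Fintype ι] [Fintype κ] (x : ι → ℝ) (y : κ → ℝ) : Prop :=
  (∀ k : ℕ, maxSum x k ≤ maxSum y k) ∧ ∑ i, x i = ∑ j, y j

/-- `x ≺_w y` (weak majorization). -/
def WeakMajorizes {ι κ : Type*} [Fintype ι] [Fintype κ] (x : ι → ℝ) (y : κ → ℝ) : Prop :=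
  ∀ k : ℕ, maxSum x k ≤ maxSum y k

section MaxSum

variable {ι : Type*} [Fintype ι]

lemma sum_le_maxSum (x : ι → ℝ) (A : Finset ι) : ∑ i ∈ A, x i ≤ maxSum x #A := by
  refine le_csSup (Set.Finite.bddAbove ?_) ⟨A, rfl, rfl⟩
  refine (Set.finite_range fun A : Finset ι ↦ ∑ i ∈ A, x i).subset ?_
  rintro _ ⟨A, -, rfl⟩
  exact ⟨A, rfl⟩

lemma maxSum_le {x : ι → ℝ} {k : ℕ} {b : ℝ} (hk : k ≤ Fintype.card ι)
    (h : ∀ A : Finset ι, #A = k → ∑ i ∈ A, x i ≤ b) : maxSum x k ≤ b := by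
  obtain ⟨A, -, hA⟩ := exists_subset_card_eq (s := univ) hk
  refine csSup_le ⟨_, A, hA, rfl⟩ ?_
  rintro _ ⟨B, hB, rfl⟩
  exact h B hB

lemma sum_le_maxSum_of_card_le {x : ι → ℝ} (hx : ∀ i, 0 ≤ x i) {A : Finset ι} {k : ℕ}
    (hA : #A ≤ k) (hk : k ≤ Fintype.card ι) : ∑ i ∈ A, x i ≤ maxSum x k := by
  obtain ⟨B, hAB, rfl⟩ := exists_superset_card_eq hA hk
  exact (sum_le_sum_of_subset_of_nonneg hAB fun i _ _ ↦ hx i).trans (sum_le_maxSum x B)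

lemma maxSum_comp_equiv {κ : Type*} [Fintype κ] (x : ι → ℝ) (e : κ ≃ ι) (k : ℕ) :
    maxSum (x ∘ e) k = maxSum x k := by
  unfold maxSum
  congr 1
  ext s
  constructor
  · rintro ⟨A, hA, rfl⟩
    exact ⟨A.map e.toEmbedding, by simpa using hA, by simp⟩
  · rintro ⟨A, hA, rfl⟩
    exact ⟨A.map e.symm.toEmbedding, by simpa using hA, by simp⟩

end MaxSum

section TopSet

variable {ι : Type*}

/-- `S` is a top set of `x` if no value of `x` off `S` exceeds a value on `S`, so that `S` carries
`#S` largest entries of the vector `x`. -/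
def IsTopSet (x : ι → ℝ) (S : Finset ι) : Prop :=
  ∀ p ∈ S, ∀ q ∉ S, x q ≤ x p

lemma IsTopSet.sum_le_sum {x : ι → ℝ} {S : Finset ι} (hS : IsTopSet x S) {T : Finset ι}
    (hT : #T = #S) : ∑ p ∈ T, x p ≤ ∑ p ∈ S, x p := by
  classical
  have hcard : #(T \ S) = #(S \ T) := card_sdiff_comm hT
  rw [← sum_sdiff_le_sum_sdiff]
  rcases (S \ T).eq_empty_or_nonempty with h | h
  · have hTS : T \ S = ∅ := by rw [← card_eq_zero, hcard, h, card_empty]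
    rw [h, hTS]
  obtain ⟨p, hp, hmin⟩ := exists_min_image (S \ T) x h
  calc ∑ q ∈ T \ S, x q
      ≤ #(T \ S) • x p := sum_le_card_nsmul _ _ _ fun q hq ↦
        hS p (mem_sdiff.1 hp).1 q (mem_sdiff.1 hq).2
    _ = #(S \ T) • x p := by rw [hcard]
    _ ≤ ∑ q ∈ S \ T, x q := card_nsmul_le_sum _ _ _ hmin

lemma exists_perm_antivary [Finite ι] {α β : Type*} [LinearOrder α] [LinearOrder β] (x : ι → α)
    (π : ι → β) : ∃ e : Equiv.Perm ι, Antivary (x ∘ e) π := by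
  cases nonempty_fintype ι
  let E : ι ≃ Fin (Fintype.card ι) := Fintype.equivFin ι
  let x' : Fin (Fintype.card ι) → αᵒᵈ := OrderDual.toDual ∘ x ∘ E.symm
  let π' : Fin (Fintype.card ι) → β := π ∘ E.symm
  have hx : Monotone (x' ∘ Tuple.sort x') := Tuple.monotone_sort x'
  have hπ : Monotone (π' ∘ Tuple.sort π') := Tuple.monotone_sort π'
  refine ⟨E.trans (((Tuple.sort π').symm.trans (Tuple.sort x')).trans E.symm), fun p q hpq ↦ ?_⟩
  have hlt : (Tuple.sort π').symm (E p) < (Tuple.sort π').symm (E q) :=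
    hπ.reflect_lt (by simpa [π'] using hpq)
  exact hx hlt.le

lemma exists_perm_forall_isTopSet [Finite ι] {κ : Type*} [LinearOrder κ] [Finite κ] (x : ι → ℝ)
    {S : κ → Finset ι} (hS : Monotone S) :
    ∃ e : Equiv.Perm ι, ∀ k, IsTopSet (x ∘ e) (S k) := by
  classical
  cases nonempty_fintype κ
  -- Since the `S k` are nested, counting those that miss a point is larger off `S k` than on it.
  obtain ⟨e, he⟩ := exists_perm_antivary x fun p ↦ #{k | p ∉ S k}
  refine ⟨e, fun k p hp q hq ↦ he (card_lt_card ?_)⟩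
  refine (ssubset_iff_of_subset fun l hl ↦ ?_).2 ⟨k, by simpa using hq, by simpa using hp⟩
  have hlk : l < k := by
    by_contra! hkl
    exact (mem_filter.1 hl).2 (hS hkl hp)
  simpa using fun hql ↦ hq (hS hlk.le hql)

variable [Fintype ι]

lemma IsTopSet.maxSum_le_sum {x : ι → ℝ} {S : Finset ι} (hS : IsTopSet x S) :
    maxSum x #S ≤ ∑ p ∈ S, x p :=
  maxSum_le (card_le_univ S) fun _ hT ↦ hS.sum_le_sum hT

lemma IsTopSet.eq_zero_of_notMem {x : ι → ℝ} {S : Finset ι} (hS : IsTopSet x S)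
    (hx : ∀ p, 0 ≤ x p) (hcard : #{p | x p ≠ 0} ≤ #S) {q : ι} (hq : q ∉ S) : x q = 0 := by
  classical
  by_contra hxq
  have hpos : 0 < x q := (hx q).lt_of_ne' hxq
  have hsub : insert q S ⊆ ({p | x p ≠ 0} : Finset ι) := by
    intro p hp
    rcases mem_insert.1 hp with rfl | hp
    · simpa using hxq
    · simpa using (hpos.trans_le (hS p hp q hq)).ne'
  have := card_le_card hsub
  rw [card_insert_of_notMem hq] at this
  omega

lemma IsTopSet.pos_of_mem {x : ι → ℝ} {S : Finset ι} (hS : IsTopSet x S) (hx : ∀ p, 0 ≤ x p)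
    (hcard : #S ≤ #{p | x p ≠ 0}) {p : ι} (hp : p ∈ S) : 0 < x p := by
  classical
  by_contra hxp
  have hzero : x p = 0 := le_antisymm (not_lt.1 hxp) (hx p)
  have hsub : ({q | x q ≠ 0} : Finset ι) ⊆ S.erase p := by
    intro q hq
    have hxq : x q ≠ 0 := by simpa using hq
    refine mem_erase.2 ⟨fun h ↦ hxq (h ▸ hzero), ?_⟩
    by_contra hqS
    exact hxq (le_antisymm (hzero ▸ hS p hp q hqS) (hx q))
  exact (card_lt_card (erase_ssubset hp)).not_ge (hcard.trans (card_le_card hsub))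

end TopSet

section Transfer

variable {ι : Type*} [DecidableEq ι]

/-- The vector obtained from `μ` by moving the amount `ε` from the coordinate `a` to the
coordinate `b`. -/
def transfer (μ : ι → ℝ) (a b : ι) (ε : ℝ) : ι → ℝ :=
  μ - Pi.single a ε + Pi.single b ε

lemma sum_transfer (μ : ι → ℝ) (a b : ι) (ε : ℝ) (A : Finset ι) :
    ∑ p ∈ A, transfer μ a b ε p =
      ∑ p ∈ A, μ p - (if a ∈ A then ε else 0) + (if b ∈ A then ε else 0) := by
  simp only [transfer, Pi.add_apply, Pi.sub_apply, sum_add_distrib, sum_sub_distrib,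
    sum_pi_single']

lemma update_add_smul_transfer (μ : ι → ℝ) (a b : ι) (w : ℝ) :
    Function.update μ a 0 + μ a • transfer (Pi.single a 1) a b w =
      transfer μ a b (μ a * w) := by
  ext p
  rcases eq_or_ne p a with rfl | hpa
  · simp only [transfer, Pi.add_apply, Pi.sub_apply, Pi.smul_apply, smul_eq_mul,
      Function.update_self, Pi.single_eq_same, Pi.single_apply]
    split_ifs <;> ring
  · simp [transfer, hpa, Pi.single_apply]

end Transfer

section Grid

lemma card_corner {α β : Type*} [DecidableEq α] [DecidableEq β] {i j : α} {s t : β} (hij : i ≠ j)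
    (hst : s ≠ t) : #({(i, s), (i, t), (j, s)} : Finset (α × β)) = 3 :=
  card_eq_three.2 ⟨_, _, _, by simp [hst], by simp [hij], by simp [hij], rfl⟩

variable {α β : Type*} [Fintype α] [Fintype β]

/-- The column sums, followed by the row sums, of a grid of numbers. For the diagonal entries of a
matrix on `ℂ^{d1} ⊗ ℂ^{d2}` these are the diagonal entries of the two partial traces. -/
def marginals (x : α × β → ℝ) : β ⊕ α → ℝ :=
  Sum.elim (fun s ↦ ∑ i, x (i, s)) fun i ↦ ∑ s, x (i, s)

variable [DecidableEq α] [DecidableEq β]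

/-- The cells of the grid `α × β` lying in row `i` or in column `s`. -/
def hook (i : α) (s : β) : Finset (α × β) :=
  {p | p.1 = i ∨ p.2 = s}

lemma mem_hook {i : α} {s : β} {p : α × β} : p ∈ hook i s ↔ p.1 = i ∨ p.2 = s := by
  simp [hook]

lemma card_product_inter_hook (A : Finset α) (B : Finset β) (i : α) (s : β) :
    #(A ×ˢ B ∩ hook i s) = #(A ∩ {i}) * #B + #(A \ {i}) * #(B ∩ {s}) := by
  have hunion : A ×ˢ B ∩ hook i s = (A ∩ {i}) ×ˢ B ∪ (A \ {i}) ×ˢ (B ∩ {s}) := by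
    ext p
    simp only [mem_inter, mem_product, mem_hook, mem_union, mem_singleton, mem_sdiff]
    tauto
  have hdisj : Disjoint ((A ∩ {i}) ×ˢ B) ((A \ {i}) ×ˢ (B ∩ {s})) :=
    disjoint_product.2 (.inl (disjoint_sdiff_inter A {i}).symm)
  rw [hunion, card_union_of_disjoint hdisj, card_product, card_product]

lemma card_product_inter_hook_le (A : Finset α) (B : Finset β) (i : α) (s : β) :
    #(A ×ˢ B ∩ hook i s) ≤ #A + #B - 1 := by
  rw [card_product_inter_hook]
  have hA : i ∈ A → 0 < #A := fun hi ↦ card_pos.2 ⟨i, hi⟩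
  have hB : s ∈ B → 0 < #B := fun hs ↦ card_pos.2 ⟨s, hs⟩
  by_cases hi : i ∈ A <;> by_cases hs : s ∈ B <;>
    simp only [hi, hs, inter_singleton_of_mem, inter_singleton_of_notMem, card_sdiff,
      singleton_inter_of_mem, singleton_inter_of_notMem, card_singleton, card_empty,
      not_false_eq_true, true_imp_iff] at hA hB ⊢ <;>
    omega

lemma card_hook_add_one (i : α) (s : β) : #(hook i s) + 1 = Fintype.card α + Fintype.card β := by
  have h := card_product_inter_hook univ univ i s
  have : 0 < Fintype.card α := Fintype.card_pos_iff.2 ⟨i⟩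
  simp only [card_sdiff, univ_product_univ, univ_inter, inter_univ, card_singleton,
    card_univ, one_mul, mul_one] at h
  omega

lemma sum_marginals_disjSum (x : α × β → ℝ) (A : Finset α) (B : Finset β) :
    ∑ z ∈ B.disjSum A, marginals x z =
      ∑ p, x p + ∑ p ∈ A ×ˢ B, x p - ∑ p ∈ Aᶜ ×ˢ Bᶜ, x p := by
  have hcols : ∑ p, x p = ∑ s ∈ B, ∑ i, x (i, s) + ∑ s ∈ Bᶜ, ∑ i, x (i, s) := by
    rw [sum_add_sum_compl, Fintype.sum_prod_type_right]
  have hrows : ∑ s ∈ Bᶜ, ∑ i, x (i, s) = ∑ p ∈ A ×ˢ Bᶜ, x p + ∑ p ∈ Aᶜ ×ˢ Bᶜ, x p := by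
    simp only [sum_product_right, ← sum_add_distrib, sum_add_sum_compl]
  have hA : ∑ i ∈ A, ∑ s, x (i, s) = ∑ p ∈ A ×ˢ B, x p + ∑ p ∈ A ×ˢ Bᶜ, x p := by
    simp only [sum_product, ← sum_add_distrib, sum_add_sum_compl]
  simp only [sum_disjSum, marginals, Sum.elim_inl, Sum.elim_inr]
  linarith

lemma le_maxSum_marginals (x : α × β → ℝ) (A : Finset α) (B : Finset β) :
    ∑ p, x p + ∑ p ∈ A ×ˢ B, x p - ∑ p ∈ Aᶜ ×ˢ Bᶜ, x p ≤ maxSum (marginals x) (#B + #A) := by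
  rw [← sum_marginals_disjSum, ← card_disjSum]
  exact sum_le_maxSum _ _

lemma maxSum_marginals_le {x : α × β → ℝ} {k : ℕ} {b : ℝ}
    (hk : k ≤ Fintype.card β + Fintype.card α)
    (h : ∀ (A : Finset α) (B : Finset β), #B + #A = k →
      ∑ p, x p + ∑ p ∈ A ×ˢ B, x p - ∑ p ∈ Aᶜ ×ˢ Bᶜ, x p ≤ b) :
    maxSum (marginals x) k ≤ b := by
  refine maxSum_le (by rwa [Fintype.card_sum]) fun Z hZ ↦ ?_
  rw [← toLeft_disjSum_toRight (u := Z), sum_marginals_disjSum]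
  exact h _ _ (by rw [card_toLeft_add_card_toRight, hZ])

lemma maxSum_marginals_two_le_of_notMem_hook [Nonempty α] [Nonempty β] {x : α × β → ℝ} {m : ℝ}
    (hx : ∀ p, 0 ≤ x p) (hm : ∀ p, x p ≠ 0 → m ≤ x p)
    (hhook : ∀ i s, ∃ q ∉ hook i s, x q ≠ 0) :
    maxSum (marginals x) 2 ≤ ∑ p, x p + maxSum x 1 - m := by
  have hmax : ∀ p, x p ≤ maxSum x 1 := fun p ↦ by simpa using sum_le_maxSum x {p}
  refine maxSum_marginals_le (Nat.add_le_add Fintype.card_pos Fintype.card_pos) fun A B hAB ↦ ?_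
  by_cases hcard : #A = 1
  · obtain ⟨i, rfl⟩ := card_eq_one.1 hcard
    obtain ⟨s, rfl⟩ := card_eq_one.1 (by omega : #B = 1)
    obtain ⟨q, hq, hxq⟩ := hhook i s
    have hmq : m ≤ ∑ p ∈ {i}ᶜ ×ˢ {s}ᶜ, x p :=
      (hm q hxq).trans <| single_le_sum (fun p _ ↦ hx p) (by simpa [mem_hook] using hq)
    have : ∑ p ∈ {i} ×ˢ {s}, x p = x (i, s) := by simp
    linarith [hmax (i, s)]
  · have hempty : A ×ˢ B = ∅ := by
      rw [product_eq_empty, ← card_eq_zero, ← card_eq_zero]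
      omega
    obtain ⟨q, -, hxq⟩ := hhook (Classical.arbitrary α) (Classical.arbitrary β)
    have : 0 ≤ ∑ p ∈ Aᶜ ×ˢ Bᶜ, x p := sum_nonneg fun p _ ↦ hx p
    rw [hempty, sum_empty]
    linarith [hmax q, hm q hxq]

lemma maxSum_marginals_four_le_of_hook [Nontrivial α] [Nontrivial β] {x : α × β → ℝ}
    (hx : ∀ p, 0 ≤ x p) {i : α} {s : β} (hhook : ∀ q ∉ hook i s, x q = 0) :
    maxSum (marginals x) 4 ≤ ∑ p, x p + maxSum x 3 := by
  have hα : 2 ≤ Fintype.card α := Fintype.one_lt_card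
  have hβ : 2 ≤ Fintype.card β := Fintype.one_lt_card
  refine maxSum_marginals_le (by omega) fun A B hAB ↦ ?_
  have hinter : ∑ p ∈ A ×ˢ B, x p = ∑ p ∈ A ×ˢ B ∩ hook i s, x p := by
    refine (sum_subset inter_subset_left fun p hp hp' ↦ hhook p fun hph ↦ ?_).symm
    exact hp' (mem_inter.2 ⟨hp, hph⟩)
  have hcard : #(A ×ˢ B ∩ hook i s) ≤ 3 := (card_product_inter_hook_le A B i s).trans (by omega)
  have hle : ∑ p ∈ A ×ˢ B ∩ hook i s, x p ≤ maxSum x 3 := by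
    refine sum_le_maxSum_of_card_le hx hcard ?_
    rw [Fintype.card_prod]
    nlinarith
  have : 0 ≤ ∑ p ∈ Aᶜ ×ˢ Bᶜ, x p := sum_nonneg fun p _ ↦ hx p
  linarith

lemma le_maxSum_marginals_two_transfer {μ : α × β → ℝ} {i j : α} {s t : β} {a : α × β} (ε : ℝ)
    (hij : i ≠ j) (hst : s ≠ t) (hμ : ∀ p ∉ hook i s, μ p = 0) (ha : a ∈ hook i s)
    (has : a ≠ (i, s)) :
    ∑ p, μ p + μ (i, s) - ε ≤ maxSum (marginals (transfer μ a (j, t) ε)) 2 := by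
  have hcompl : ∑ p ∈ ({i} : Finset α)ᶜ ×ˢ ({s} : Finset β)ᶜ, μ p = 0 :=
    sum_eq_zero fun p hp ↦ hμ p (by simpa [mem_hook] using hp)
  have ha' : ¬(a.1 ≠ i ∧ a.2 ≠ s) := by simpa [mem_hook, or_iff_not_imp_left] using ha
  have h := le_maxSum_marginals (transfer μ a (j, t) ε) {i} {s}
  simp only [sum_transfer, hcompl] at h
  simpa [has, ha', hij.symm, hst.symm] using h

lemma le_maxSum_marginals_four_transfer {μ : α × β → ℝ} {i j : α} {s t : β} {a : α × β} (ε : ℝ)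
    (hij : i ≠ j) (hst : s ≠ t) (hμ : ∀ p ∉ hook i s, μ p = 0) (ha : a ∈ hook i s)
    (hcorner : a ∉ ({(i, s), (i, t), (j, s)} : Finset (α × β))) :
    ∑ p, μ p + ∑ p ∈ {(i, s), (i, t), (j, s)}, μ p + ε ≤
      maxSum (marginals (transfer μ a (j, t) ε)) 4 := by
  have hjt : (j, t) ∉ hook i s := by simp [mem_hook, hij.symm, hst.symm]
  have hsquare : ({i, j} : Finset α) ×ˢ ({s, t} : Finset β) =
      insert (j, t) {(i, s), (i, t), (j, s)} := by
    ext ⟨k, r⟩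
    simp only [mem_product, mem_insert, mem_singleton, Prod.mk.injEq]
    tauto
  have hjt' : (j, t) ∉ ({(i, s), (i, t), (j, s)} : Finset (α × β)) := by
    simp [hij.symm, hst.symm]
  have hsum : ∑ p ∈ ({i, j} : Finset α) ×ˢ ({s, t} : Finset β), transfer μ a (j, t) ε p =
      ∑ p ∈ {(i, s), (i, t), (j, s)}, μ p + ε := by
    have ha' : a ∉ insert (j, t) {(i, s), (i, t), (j, s)} :=
      mem_insert.not.2 (not_or.2 ⟨fun h ↦ hjt (h ▸ ha), hcorner⟩)
    rw [sum_transfer, hsquare, if_neg ha', if_pos (mem_insert_self _ _), sum_insert hjt', hμ _ hjt,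
      zero_add, sub_zero]
  have hcompl :
      ∑ p ∈ ({i, j} : Finset α)ᶜ ×ˢ ({s, t} : Finset β)ᶜ, transfer μ a (j, t) ε p = 0 := by
    have hoff : ∀ p ∈ ({i, j} : Finset α)ᶜ ×ˢ ({s, t} : Finset β)ᶜ, p ∉ hook i s := by
      simp +contextual [mem_hook]
    rw [sum_transfer, sum_eq_zero fun p hp ↦ hμ p (hoff p hp), if_neg fun h ↦ hoff a h ha,
      if_neg (by simp), sub_zero, add_zero]
  have htotal : ∑ p, transfer μ a (j, t) ε p = ∑ p, μ p := by simp [sum_transfer]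
  have h := le_maxSum_marginals (transfer μ a (j, t) ε) {i, j} {s, t}
  rw [card_pair hij, card_pair hst, hsum, hcompl, htotal] at h
  linarith

/-- The grid `μ` of nonnegative numbers is supported in the hook of row `i` and column `s`, its
largest entry is at the corner `(i, s)` of the hook, the next two are at `(i, t)` and `(j, s)`, and
a further positive entry is at the cell `a`. -/
structure IsHookArrangement (μ : α × β → ℝ) (i j : α) (s t : β) (a : α × β) : Prop where
  row_ne : i ≠ j
  col_ne : s ≠ t
  nonneg : ∀ p, 0 ≤ μ p
  eq_zero_of_notMem : ∀ p ∉ hook i s, μ p = 0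
  isTopSet_one : IsTopSet μ {(i, s)}
  isTopSet_three : IsTopSet μ {(i, s), (i, t), (j, s)}
  mem : a ∈ hook i s
  notMem_three : a ∉ ({(i, s), (i, t), (j, s)} : Finset (α × β))
  pos : 0 < μ a

lemma exists_isHookArrangement {x : α × β → ℝ} (hx : ∀ p, 0 ≤ x p) (hfour : 4 ≤ #{p | x p ≠ 0})
    (hcard : #{p | x p ≠ 0} + 1 ≤ Fintype.card α + Fintype.card β) {i j : α} {s t : β}
    (hij : i ≠ j) (hst : s ≠ t) :
    ∃ (e : Equiv.Perm (α × β)) (a : α × β), IsHookArrangement (x ∘ e) i j s t a := by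
  let T : Finset (α × β) := {(i, s), (i, t), (j, s)}
  have hhook : #{p | x p ≠ 0} ≤ #(hook i s) := by
    rw [← card_hook_add_one i s] at hcard
    exact Nat.le_of_succ_le_succ hcard
  have hT : #T = 3 := card_corner hij hst
  obtain ⟨a, ha, haT⟩ := exists_mem_notMem_of_card_lt_card (s := T) (t := hook i s) (by omega)
  have hmono : Monotone ![{(i, s)}, T, insert a T, hook i s] := by
    refine Fin.monotone_iff_le_succ.2 fun k ↦ ?_
    fin_cases k
    · exact singleton_subset_iff.2 (mem_insert_self _ _)
    · exact subset_insert a T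
    · exact insert_subset ha (by simp [T, insert_subset_iff, mem_hook])
  obtain ⟨e, he⟩ := exists_perm_forall_isTopSet x hmono
  have hsupp : #{p | (x ∘ e) p ≠ 0} = #{p | x p ≠ 0} := by
    simpa only [Fintype.card_subtype] using
      Fintype.card_congr (e.subtypeEquiv (p := fun p ↦ (x ∘ e) p ≠ 0) (q := fun p ↦ x p ≠ 0)
        fun _ ↦ Iff.rfl)
  have hnonneg : ∀ p, 0 ≤ (x ∘ e) p := fun p ↦ hx (e p)
  have hfourth : #(insert a T) ≤ #{p | (x ∘ e) p ≠ 0} := by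
    rw [card_insert_of_notMem haT, hT, hsupp]
    exact hfour
  exact ⟨e, a, {
    row_ne := hij
    col_ne := hst
    nonneg := hnonneg
    eq_zero_of_notMem := fun p ↦ (he 3).eq_zero_of_notMem hnonneg (hsupp.trans_le hhook)
    isTopSet_one := he 0
    isTopSet_three := he 1
    mem := ha
    notMem_three := haT
    pos := (he 2).pos_of_mem hnonneg hfourth (mem_insert_self a T) }⟩

variable {μ : α × β → ℝ} {i j : α} {s t : β} {a : α × β}

lemma IsHookArrangement.maxSum_one_le (h : IsHookArrangement μ i j s t a) :
    maxSum μ 1 ≤ μ (i, s) := by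
  simpa using h.isTopSet_one.maxSum_le_sum

lemma IsHookArrangement.maxSum_three_le (h : IsHookArrangement μ i j s t a) :
    maxSum μ 3 ≤ ∑ p ∈ {(i, s), (i, t), (j, s)}, μ p :=
  card_corner h.row_ne h.col_ne ▸ h.isTopSet_three.maxSum_le_sum

lemma IsHookArrangement.fst_ne (h : IsHookArrangement μ i j s t a) : a.1 ≠ j := by
  have ha := mem_hook.1 h.mem
  have hij := h.row_ne
  have hcorner := h.notMem_three
  grind

lemma IsHookArrangement.snd_ne (h : IsHookArrangement μ i j s t a) : a.2 ≠ t := by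
  have ha := mem_hook.1 h.mem
  have hst := h.col_ne
  have hcorner := h.notMem_three
  grind

lemma IsHookArrangement.apply_eq_zero (h : IsHookArrangement μ i j s t a) : μ (j, t) = 0 :=
  h.eq_zero_of_notMem _ (by simp [mem_hook, h.row_ne.symm, h.col_ne.symm])

lemma IsHookArrangement.exists_maxSum_marginals_comp_lt (h : IsHookArrangement μ i j s t a)
    {ε m : ℝ} (hε : 0 < ε) (hεm : ε < m) (hm : ∀ p, μ p ≠ 0 → m ≤ μ p)
    (g : Equiv.Perm (α × β)) :
    ∃ k, maxSum (marginals (μ ∘ g)) k < maxSum (marginals (transfer μ a (j, t) ε)) k := by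
  have : Nontrivial α := ⟨i, j, h.row_ne⟩
  have : Nontrivial β := ⟨s, t, h.col_ne⟩
  have hsum : ∑ p, (μ ∘ g) p = ∑ p, μ p := Equiv.sum_comp g μ
  have hnonneg : ∀ p, 0 ≤ (μ ∘ g) p := fun p ↦ h.nonneg (g p)
  by_cases hhook : ∃ i' s', ∀ q ∉ hook i' s', (μ ∘ g) q = 0
  · obtain ⟨i', s', hhook⟩ := hhook
    refine ⟨4, ?_⟩
    calc maxSum (marginals (μ ∘ g)) 4
        ≤ ∑ p, (μ ∘ g) p + maxSum (μ ∘ g) 3 := maxSum_marginals_four_le_of_hook hnonneg hhook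
      _ = ∑ p, μ p + maxSum μ 3 := by rw [hsum, maxSum_comp_equiv]
      _ ≤ ∑ p, μ p + ∑ p ∈ {(i, s), (i, t), (j, s)}, μ p := by grw [h.maxSum_three_le]
      _ < ∑ p, μ p + ∑ p ∈ {(i, s), (i, t), (j, s)}, μ p + ε := lt_add_of_pos_right _ hε
      _ ≤ maxSum (marginals (transfer μ a (j, t) ε)) 4 := le_maxSum_marginals_four_transfer ε
        h.row_ne h.col_ne h.eq_zero_of_notMem h.mem h.notMem_three
  · push Not at hhook
    refine ⟨2, ?_⟩
    have has : a ≠ (i, s) := fun has ↦ h.notMem_three (has ▸ mem_insert_self _ _)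
    calc maxSum (marginals (μ ∘ g)) 2
        ≤ ∑ p, (μ ∘ g) p + maxSum (μ ∘ g) 1 - m :=
          maxSum_marginals_two_le_of_notMem_hook hnonneg (fun p ↦ hm (g p)) hhook
      _ = ∑ p, μ p + maxSum μ 1 - m := by rw [hsum, maxSum_comp_equiv]
      _ ≤ ∑ p, μ p + μ (i, s) - m := by grw [h.maxSum_one_le]
      _ < ∑ p, μ p + μ (i, s) - ε := sub_lt_sub_left hεm _
      _ ≤ maxSum (marginals (transfer μ a (j, t) ε)) 2 :=
        le_maxSum_marginals_two_transfer ε h.row_ne h.col_ne h.eq_zero_of_notMem h.mem has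

end Grid

lemma exists_pos_forall_le_of_ne_zero {ι : Type*} [Finite ι] {x : ι → ℝ} (hx : ∀ p, 0 ≤ x p) :
    ∃ m, 0 < m ∧ ∀ p, x p ≠ 0 → m ≤ x p := by
  rcases {p | x p ≠ 0}.eq_empty_or_nonempty with h | h
  · exact ⟨1, one_pos, fun p hp ↦ (Set.eq_empty_iff_forall_notMem.1 h p hp).elim⟩
  · obtain ⟨q, hq, hmin⟩ := Set.exists_min_image _ x (Set.toFinite _) h
    exact ⟨x q, (hx q).lt_of_ne' hq, hmin⟩

section Hermitian

variable {ι : Type*} [Fintype ι]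

lemma exists_perm_of_map_univ_eq {γ : Type*} {x y : ι → γ}
    (h : univ.val.map x = univ.val.map y) : ∃ e : Equiv.Perm ι, x = y ∘ e := by
  classical
  have hfiber : ∀ c, Nonempty ({i // x i = c} ≃ {i // y i = c}) := by
    intro c
    have hcount := congrArg (Multiset.count c) h
    rw [← Fintype.card_eq, Fintype.card_subtype, Fintype.card_subtype]
    simpa only [Multiset.count_map, eq_comm, card_def, filter_val] using hcount
  let f := fun c ↦ (hfiber c).some
  exact ⟨Equiv.ofFiberEquiv f, funext fun i ↦ (Equiv.ofFiberEquiv_map f i).symm⟩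

variable {𝕜 : Type*} [RCLike 𝕜]

lemma norm_toLp_sqrt {ω : ι → ℝ} (hω : ∀ p, 0 ≤ ω p) :
    ‖(WithLp.toLp 2 fun p ↦ (√(ω p) : 𝕜) : EuclideanSpace 𝕜 ι)‖ = √(∑ p, ω p) := by
  simp [EuclideanSpace.norm_eq, Real.sq_sqrt, hω]

variable [DecidableEq ι]

lemma exists_eigenvalues_diagonal_eq_comp {x : ι → ℝ} {A : Matrix ι ι 𝕜}
    (hA : A.IsHermitian) (h : A = diagonal fun p ↦ (x p : 𝕜)) :
    ∃ e : Equiv.Perm ι, hA.eigenvalues = x ∘ e := by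
  have hroots : A.charpoly.roots = univ.val.map fun p ↦ (x p : 𝕜) := by
    rw [h, charpoly_diagonal, Polynomial.roots_prod _ _
      (prod_ne_zero_iff.2 fun _ _ ↦ Polynomial.X_sub_C_ne_zero _)]
    simp
  rw [hA.roots_charpoly_eq_eigenvalues] at hroots
  apply exists_perm_of_map_univ_eq
  simpa [Multiset.map_map, Function.comp_def] using congrArg (Multiset.map RCLike.re) hroots

/-- The matrix with the vectors of the orthonormal basis `b` as columns. -/
noncomputable def columnMatrix (b : OrthonormalBasis ι 𝕜 (EuclideanSpace 𝕜 ι)) : Matrix ι ι 𝕜 :=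
  of fun p k ↦ b k p

lemma columnMatrix_mem_unitaryGroup (b : OrthonormalBasis ι 𝕜 (EuclideanSpace 𝕜 ι)) :
    columnMatrix b ∈ unitaryGroup ι 𝕜 :=
  (EuclideanSpace.basisFun ι 𝕜).toMatrix_orthonormalBasis_mem_unitary b

lemma exists_unitary_conj_eq_diagonal {A : Matrix ι ι 𝕜} (hA : A.IsHermitian)
    (e : Equiv.Perm ι) :
    ∃ W ∈ unitaryGroup ι 𝕜,
      W * A * Wᴴ = diagonal fun p ↦ ((hA.eigenvalues ∘ e) p : 𝕜) := by
  let V := columnMatrix (hA.eigenvectorBasis.reindex e.symm)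
  have hV : V ∈ unitaryGroup ι 𝕜 := columnMatrix_mem_unitaryGroup _
  have hAV : A * V = V * diagonal fun p ↦ ((hA.eigenvalues ∘ e) p : 𝕜) := by
    ext p k
    have := congrFun (hA.mulVec_eigenvectorBasis (e k)) p
    rw [mul_diagonal]
    simpa [V, columnMatrix, mul_apply, mulVec, dotProduct, mul_comm,
      RCLike.real_smul_eq_coe_mul] using this
  refine ⟨Vᴴ, Unitary.star_mem hV, ?_⟩
  rw [conjTranspose_conjTranspose, Matrix.mul_assoc, hAV, ← Matrix.mul_assoc,
    ← star_eq_conjTranspose, mem_unitaryGroup_iff'.1 hV, one_mul]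

lemma exists_orthonormalBasis_single_of_ne {a b : ι} (hab : a ≠ b) {u : EuclideanSpace 𝕜 ι}
    (hu : ‖u‖ = 1) (hu0 : ∀ p, p ≠ a → p ≠ b → u p = 0) :
    ∃ B : OrthonormalBasis ι 𝕜 (EuclideanSpace 𝕜 ι),
      B a = u ∧ ∀ p, p ≠ a → p ≠ b → B p = EuclideanSpace.single p 1 := by
  let v : ι → EuclideanSpace 𝕜 ι := fun p ↦ if p = a then u else EuclideanSpace.single p 1
  have hv : Orthonormal 𝕜 (({b}ᶜ : Set ι).domRestrict v) := by
    refine ⟨fun ⟨p, hp⟩ ↦ ?_, fun ⟨p, hp⟩ ⟨q, hq⟩ hpq ↦ ?_⟩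
    · by_cases hpa : p = a
      · simp [v, hpa, hu]
      · simp [v, hpa]
    · have hpq' : p ≠ q := fun h ↦ hpq (Subtype.ext h)
      by_cases hpa : p = a
      · have hqa : q ≠ a := hpa ▸ hpq'.symm
        simp [v, hpa, hqa, EuclideanSpace.inner_single_right, hu0 q hqa hq]
      by_cases hqa : q = a
      · simp [v, hpa, hqa, EuclideanSpace.inner_single_left, hu0 p hpa hp]
      · simp [v, hpa, hqa, EuclideanSpace.inner_single_left, hpq']
  obtain ⟨B, hB⟩ := hv.exists_orthonormalBasis_extension_of_card_eq finrank_euclideanSpace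
  exact ⟨B, by simp [hB a hab, v], fun p hpa hpb ↦ by simp [hB p hpb, v, hpa]⟩

lemma columnMatrix_mul_diagonal_mul_conjTranspose_apply
    (B : OrthonormalBasis ι 𝕜 (EuclideanSpace 𝕜 ι)) (μ : ι → ℝ) (p q : ι) :
    (columnMatrix B * diagonal (fun k ↦ (μ k : 𝕜)) * (columnMatrix B)ᴴ) p q =
      ∑ k, (μ k : 𝕜) * (B k p * star (B k q)) := by
  rw [mul_apply]
  refine sum_congr rfl fun k _ ↦ ?_
  simp only [mul_diagonal, conjTranspose_apply, columnMatrix, of_apply]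
  ring

lemma exists_unitary_conj_diagonal_eq_add_vecMulVec {μ : ι → ℝ} {a b : ι} (hab : a ≠ b)
    (hb : μ b = 0) {u : EuclideanSpace 𝕜 ι} (hu : ‖u‖ = 1)
    (hu0 : ∀ p, p ≠ a → p ≠ b → u p = 0) :
    ∃ R ∈ unitaryGroup ι 𝕜, R * diagonal (fun p ↦ (μ p : 𝕜)) * Rᴴ =
      diagonal (fun p ↦ (Function.update μ a 0 p : 𝕜)) + (μ a : 𝕜) • vecMulVec u (star u) := by
  obtain ⟨B, hBa, hB⟩ := exists_orthonormalBasis_single_of_ne hab hu hu0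
  refine ⟨columnMatrix B, columnMatrix_mem_unitaryGroup B, ?_⟩
  ext p q
  have hterm : ∀ k, (μ k : 𝕜) * (B k p * star (B k q)) =
      (if k = p then diagonal (fun p ↦ (Function.update μ a 0 p : 𝕜)) p q else 0) +
        if k = a then (μ a : 𝕜) * (u p * star (u q)) else 0 := by
    intro k
    rcases eq_or_ne k a with rfl | hka
    · simp +contextual [hBa, diagonal_apply]
    rcases eq_or_ne k b with rfl | hkb
    · simp only [hb, hka, RCLike.ofReal_zero, zero_mul, if_false, add_zero, diagonal_apply]
      split_ifs with hkp hpq <;> simp_all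
    · rcases eq_or_ne k p with rfl | hkp
      · simp +contextual [hB k hka hkb, hka, diagonal_apply, eq_comm]
      · simp [hB k hka hkb, hka, hkp, hkp.symm]
  rw [columnMatrix_mul_diagonal_mul_conjTranspose_apply, sum_congr rfl fun k _ ↦ hterm k,
    sum_add_distrib, sum_ite_eq', sum_ite_eq', if_pos (mem_univ p), if_pos (mem_univ a)]
  rfl

lemma exists_norm_eq_one_vecMulVec_eq_transfer {a b : ι} (hab : a ≠ b) {w : ℝ} (hw0 : 0 ≤ w)
    (hw1 : w ≤ 1) :
    ∃ u : EuclideanSpace 𝕜 ι, ‖u‖ = 1 ∧ (∀ p, p ≠ a → p ≠ b → u p = 0) ∧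
      ∀ p q, s(p, q) ≠ s(a, b) → vecMulVec u (star u) p q =
        diagonal (fun p ↦ (transfer (Pi.single a 1) a b w p : 𝕜)) p q := by
  let ω : ι → ℝ := transfer (Pi.single a 1) a b w
  have hω0 : ∀ p, p ≠ a → p ≠ b → ω p = 0 := fun p hpa hpb ↦ by simp [ω, transfer, hpa, hpb]
  have hω : ∀ p, 0 ≤ ω p := by
    intro p
    rcases eq_or_ne p a with rfl | hpa
    · simp [ω, transfer, hab, hw1]
    rcases eq_or_ne p b with rfl | hpb
    · simp [ω, transfer, hpa, hw0]
    · exact (hω0 p hpa hpb).ge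
  refine ⟨WithLp.toLp 2 fun p ↦ (√(ω p) : 𝕜), ?_, fun p hpa hpb ↦ by simp [hω0 p hpa hpb],
    fun p q hpq ↦ ?_⟩
  · rw [norm_toLp_sqrt hω, sum_transfer]
    simp
  · rcases eq_or_ne p q with rfl | hne
    · simp [vecMulVec_apply, ← RCLike.ofReal_mul, Real.mul_self_sqrt (hω p), ω]
    · have hzero : ω p = 0 ∨ ω q = 0 := by
        rw [Ne, Sym2.eq_iff] at hpq
        grind
      rcases hzero with h | h <;> simp [vecMulVec_apply, hne, h]

lemma exists_unitary_conj_diagonal_eq_transfer {μ : ι → ℝ} {a b : ι} (hab : a ≠ b)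
    (hb : μ b = 0) {ε : ℝ} (hε : 0 ≤ ε) (hεa : ε ≤ μ a) :
    ∃ R ∈ unitaryGroup ι 𝕜, ∀ p q, s(p, q) ≠ s(a, b) →
      (R * diagonal (fun p ↦ (μ p : 𝕜)) * Rᴴ) p q =
        diagonal (fun p ↦ (transfer μ a b ε p : 𝕜)) p q := by
  have hw0 : 0 ≤ ε / μ a := div_nonneg hε (hε.trans hεa)
  have hw1 : ε / μ a ≤ 1 := div_le_one_of_le₀ hεa (hε.trans hεa)
  have hμw : μ a * (ε / μ a) = ε := mul_div_cancel_of_imp' fun h ↦ le_antisymm (h ▸ hεa) hε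
  obtain ⟨u, hu, hu0, huu⟩ := exists_norm_eq_one_vecMulVec_eq_transfer (𝕜 := 𝕜) hab hw0 hw1
  obtain ⟨R, hR, hRμ⟩ := exists_unitary_conj_diagonal_eq_add_vecMulVec hab hb hu hu0
  refine ⟨R, hR, fun p q hpq ↦ ?_⟩
  rw [hRμ, Matrix.add_apply, Matrix.smul_apply, huu p q hpq, ← hμw, ← update_add_smul_transfer,
    hμw]
  rcases eq_or_ne p q with rfl | hne
  · simp
  · simp [hne]

end Hermitian

section PartialTrace

variable {d1 d2 : ℕ}

/-- The matrix `M` on `ℂ^{d1} ⊗ ℂ^{d2}` has diagonal `x`, and each nonzero off-diagonal entry of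
`M` joins two index pairs with both components distinct. Such entries do not contribute to the
partial traces. -/
def IsGridDiagonal (M : Matrix (Fin d1 × Fin d2) (Fin d1 × Fin d2) ℂ) (x : Fin d1 × Fin d2 → ℝ) :
    Prop :=
  ∀ p q, p.1 = q.1 ∨ p.2 = q.2 → M p q = diagonal (fun p ↦ (x p : ℂ)) p q

variable {M : Matrix (Fin d1 × Fin d2) (Fin d1 × Fin d2) ℂ} {x : Fin d1 × Fin d2 → ℝ}

lemma IsGridDiagonal.ptrace1_eq (h : IsGridDiagonal M x) :
    ptrace1 M = diagonal fun s ↦ ((∑ i, x (i, s) : ℝ) : ℂ) := by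
  ext s t
  have hM : ∀ i, M (i, s) (i, t) = diagonal (fun p ↦ (x p : ℂ)) (i, s) (i, t) :=
    fun _ ↦ h _ _ (.inl rfl)
  simp only [ptrace1, of_apply, hM]
  rcases eq_or_ne s t with rfl | hst
  · simp
  · simp [hst]

lemma IsGridDiagonal.ptrace2_eq (h : IsGridDiagonal M x) :
    ptrace2 M = diagonal fun i ↦ ((∑ s, x (i, s) : ℝ) : ℂ) := by
  ext i j
  have hM : ∀ s, M (i, s) (j, s) = diagonal (fun p ↦ (x p : ℂ)) (i, s) (j, s) :=
    fun _ ↦ h _ _ (.inr rfl)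
  simp only [ptrace2, of_apply, hM]
  rcases eq_or_ne i j with rfl | hij
  · simp
  · simp [hij]

lemma IsGridDiagonal.maxSum_eigenvalues (h : IsGridDiagonal M x) (h1 : (ptrace1 M).IsHermitian)
    (h2 : (ptrace2 M).IsHermitian) (k : ℕ) :
    maxSum (Sum.elim h1.eigenvalues h2.eigenvalues) k = maxSum (marginals x) k := by
  obtain ⟨e1, he1⟩ := exists_eigenvalues_diagonal_eq_comp h1 h.ptrace1_eq
  obtain ⟨e2, he2⟩ := exists_eigenvalues_diagonal_eq_comp h2 h.ptrace2_eq
  rw [he1, he2, ← maxSum_comp_equiv (marginals x) (Equiv.sumCongr e1 e2)]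
  congr 1
  ext z
  cases z <;> rfl

lemma isGridDiagonal_of_isDiag (hM : M.IsDiag) (hx : ∀ p, M p p = x p) : IsGridDiagonal M x := by
  intro p q _
  rcases eq_or_ne p q with rfl | hpq
  · rw [hx, diagonal_apply_eq]
  · rw [hM hpq, diagonal_apply_ne _ hpq]

lemma exists_unitary_isGridDiagonal_transfer
    {C : Matrix (Fin d1 × Fin d2) (Fin d1 × Fin d2) ℂ} (hC : C.IsHermitian)
    {e : Equiv.Perm (Fin d1 × Fin d2)} {a b : Fin d1 × Fin d2} (h1 : a.1 ≠ b.1) (h2 : a.2 ≠ b.2)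
    (hb : hC.eigenvalues (e b) = 0) {ε : ℝ} (hε : 0 ≤ ε) (hεa : ε ≤ hC.eigenvalues (e a)) :
    ∃ U ∈ unitaryGroup (Fin d1 × Fin d2) ℂ,
      IsGridDiagonal (U * C * Uᴴ) (transfer (hC.eigenvalues ∘ e) a b ε) := by
  obtain ⟨W, hW, hWC⟩ := exists_unitary_conj_eq_diagonal hC e
  obtain ⟨R, hR, hRμ⟩ := exists_unitary_conj_diagonal_eq_transfer (𝕜 := ℂ)
    (μ := hC.eigenvalues ∘ e) (fun hab ↦ h1 (congrArg Prod.fst hab)) hb hε hεa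
  refine ⟨R * W, mul_mem hR hW, fun p q hpq ↦ ?_⟩
  have hconj : R * W * C * (R * W)ᴴ = R * (W * C * Wᴴ) * Rᴴ := by
    simp only [conjTranspose_mul, Matrix.mul_assoc]
  rw [hconj, hWC]
  refine hRμ p q fun h ↦ ?_
  rcases Sym2.eq_iff.1 h with ⟨rfl, rfl⟩ | ⟨rfl, rfl⟩
  · exact hpq.elim h1 h2
  · exact hpq.elim h1.symm h2.symm

end PartialTrace

theorem low_rank_no_diagonal_majorization_general (d1 d2 : ℕ) (hd1 : 2 ≤ d1) (hd2 : 2 ≤ d2)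
    (C : Matrix (Fin d1 × Fin d2) (Fin d1 × Fin d2) ℂ) (hC : C.PosSemidef)
    (hr4 : 4 ≤ C.rank) (hr : C.rank + 1 ≤ d1 + d2) :
    ∃ U : Matrix (Fin d1 × Fin d2) (Fin d1 × Fin d2) ℂ,
      U ∈ Matrix.unitaryGroup (Fin d1 × Fin d2) ℂ ∧
      ∀ D : Matrix (Fin d1 × Fin d2) (Fin d1 × Fin d2) ℂ, D.IsDiag →
        (∃ g : Equiv.Perm (Fin d1 × Fin d2), ∀ p, D p p = (hC.1.eigenvalues (g p) : ℂ)) →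
        ∀ (hU1 : (ptrace1 (U * C * Uᴴ)).IsHermitian)
          (hU2 : (ptrace2 (U * C * Uᴴ)).IsHermitian)
          (hD1 : (ptrace1 D).IsHermitian) (hD2 : (ptrace2 D).IsHermitian),
          ¬ WeakMajorizes (Sum.elim hU1.eigenvalues hU2.eigenvalues)
              (Sum.elim hD1.eigenvalues hD2.eigenvalues) := by
  let i : Fin d1 := ⟨0, by omega⟩
  let j : Fin d1 := ⟨1, by omega⟩
  let s : Fin d2 := ⟨0, by omega⟩
  let t : Fin d2 := ⟨1, by omega⟩
  have hrank : C.rank = #{p | hC.1.eigenvalues p ≠ 0} := by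
    rw [hC.1.rank_eq_card_non_zero_eigs, Fintype.card_subtype]
  have hij : i ≠ j := by simp [i, j]
  have hst : s ≠ t := by simp [s, t]
  obtain ⟨e, a, h⟩ := exists_isHookArrangement hC.eigenvalues_nonneg (hrank ▸ hr4)
    (by simpa [← hrank] using hr) hij hst
  obtain ⟨m, hm0, hm⟩ := exists_pos_forall_le_of_ne_zero h.nonneg
  obtain ⟨ε, hε0, hεm⟩ := exists_between hm0
  obtain ⟨U, hU, hUC⟩ := exists_unitary_isGridDiagonal_transfer hC.1 h.fst_ne h.snd_ne
    h.apply_eq_zero hε0.le (hεm.le.trans (hm a h.pos.ne'))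
  refine ⟨U, hU, fun D hD ⟨g, hg⟩ hU1 hU2 hD1 hD2 hmaj ↦ ?_⟩
  have hDx : IsGridDiagonal D ((hC.1.eigenvalues ∘ e) ∘ g.trans e.symm) :=
    isGridDiagonal_of_isDiag hD (by simpa using hg)
  obtain ⟨k, hk⟩ := h.exists_maxSum_marginals_comp_lt hε0 hεm hm (g.trans e.symm)
  rw [← hUC.maxSum_eigenvalues hU1 hU2, ← hDx.maxSum_eigenvalues hD1 hD2] at hk
  exact hk.not_ge (hmaj k)

theorem low_rank_no_diagonal_majorization (d1 d2 : ℕ) (hd1 : 2 ≤ d1) (hdd : d1 < d2)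
    (C : Matrix (Fin d1 × Fin d2) (Fin d1 × Fin d2) ℂ) (hC : C.PosSemidef)
    (hr4 : 4 ≤ C.rank) (hrd2 : C.rank ≤ d2) :
    ∃ U : Matrix (Fin d1 × Fin d2) (Fin d1 × Fin d2) ℂ,
      U ∈ Matrix.unitaryGroup (Fin d1 × Fin d2) ℂ ∧
      ∀ D : Matrix (Fin d1 × Fin d2) (Fin d1 × Fin d2) ℂ, D.IsDiag →
        (∃ g : Equiv.Perm (Fin d1 × Fin d2), ∀ p, D p p = (hC.1.eigenvalues (g p) : ℂ)) →
        ∀ (hU1 : (ptrace1 (U * C * Uᴴ)).IsHermitian)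
          (hU2 : (ptrace2 (U * C * Uᴴ)).IsHermitian)
          (hD1 : (ptrace1 D).IsHermitian) (hD2 : (ptrace2 D).IsHermitian),
          ¬ Majorizes (Sum.elim hU1.eigenvalues hU2.eigenvalues)
              (Sum.elim hD1.eigenvalues hD2.eigenvalues) := by
  obtain ⟨U, hU, h⟩ := low_rank_no_diagonal_majorization_general d1 d2 hd1 (by omega) C hC hr4
    (by omega)
  exact ⟨U, hU, fun D hD hg hU1 hU2 hD1 hD2 hmaj ↦ h D hD hg hU1 hU2 hD1 hD2 hmaj.1⟩
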